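/- arXiv:2503.01350 — 3 statements merged into one kernel-verified Lean document; each statement's English description precedes it below -/
import Mathlib

section
/- Let G be a finite connected simple graph on vertex set V with nonnegative edge weights w, let x̄ : V → {0,1} with nonempty facility set F = {k ∈ V : x̄(k) = 1}, let i ∈ V, and let M ∈ ℝ satisfy M ≥ min_{j ∈ F} d_w(k,j) for every k ∈ V. Then the optimal value of the linear program SP^i, namely sup { π(i) : π : V → ℝ, π(k) ≥ 0 for all k, π(k) ≤ π(l) + w({k,l}) and π(l) ≤ π(k) + w({k,l}) for every edge {k,l} of G, and π(k) ≤ M·(1 − x̄(k)) for all k }, equals min_{j ∈ F} d_w(i,j), the distance from i to its nearest facility. -/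
open SimpleGraph

/-- The weighted distance between `i` and `j`: the infimum (`sInf` in `ℝ`) of the
weighted lengths of all walks from `i` to `j`. -/
noncomputable def gdist {V : Type*} (G : SimpleGraph V) (w : Sym2 V → ℝ) (i j : V) : ℝ :=
  sInf {L : ℝ | ∃ p : G.Walk i j, (p.edges.map w).sum = L}

/-!
Summing the edge inequalities along a walk from `i` to a facility `j` gives
`π i ≤ π j + d_w(i, j)`, and the big-M constraint makes `π j ≤ 0`; hence no feasible potential
exceeds the distance to the nearest facility. Conversely that distance is itself feasible: each
`d_w(·, j)` satisfies the edge inequalities, these are preserved by pointwise infima, and the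
big-M constraint holds because the distance vanishes on `F` and is at most `M` elsewhere.
-/

section EdgePotential

variable {V R : Type*} {G : SimpleGraph V} {w : Sym2 V → R}

/-- A node potential satisfying the edge inequalities of `SP^i`: it drops by at most the weight
of an edge when that edge is traversed. Both directions of the inequality are covered, since
adjacency and `s(k, l)` are symmetric in `k` and `l`. -/
def IsEdgePotential [Add R] [LE R] (G : SimpleGraph V) (w : Sym2 V → R) (π : V → R) : Prop :=
  ∀ k l, G.Adj k l → π k ≤ π l + w s(k, l)

theorem IsEdgePotential.le_add_sum_edges [AddCommMonoid R] [Preorder R] [AddRightMono R]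
    {π : V → R} (hπ : IsEdgePotential G w π) {a b : V} (p : G.Walk a b) :
    π a ≤ π b + (p.edges.map w).sum := by
  induction p with
  | nil => simp
  | @cons a c b hac p ih =>
    calc π a ≤ π c + w s(a, c) := hπ a c hac
      _ ≤ π b + (p.edges.map w).sum + w s(a, c) := by gcongr
      _ = π b + ((Walk.cons hac p).edges.map w).sum := by
        rw [Walk.edges_cons, List.map_cons, List.sum_cons, add_assoc, add_comm (w _)]

theorem IsEdgePotential.iInf [AddGroup R] [ConditionallyCompleteLattice R] [AddRightMono R]
    {ι : Type*} [Nonempty ι] {π : ι → V → R} (hπ : ∀ t, IsEdgePotential G w (π t))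
    (hbdd : ∀ k, BddBelow (Set.range fun t => π t k)) :
    IsEdgePotential G w fun k => ⨅ t, π t k := fun k l hkl =>
  le_ciInf_add fun t => (ciInf_le (hbdd k) t).trans (hπ t k l hkl)

end EdgePotential

section WeightedDistance

variable {V : Type*} {G : SimpleGraph V} {w : Sym2 V → ℝ} {a b : V}

theorem sum_map_edges_nonneg (hw : ∀ e ∈ G.edgeSet, 0 ≤ w e) (p : G.Walk a b) :
    0 ≤ (p.edges.map w).sum :=
  List.sum_nonneg <| List.forall_mem_map.2 fun e he => hw e (p.edges_subset_edgeSet he)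

theorem gdist_le_sum_edges (hw : ∀ e ∈ G.edgeSet, 0 ≤ w e) (p : G.Walk a b) :
    gdist G w a b ≤ (p.edges.map w).sum :=
  csInf_le ⟨0, Set.forall_mem_range.2 (sum_map_edges_nonneg hw)⟩ ⟨p, rfl⟩

theorem le_gdist (hab : G.Reachable a b) {c : ℝ}
    (hc : ∀ p : G.Walk a b, c ≤ (p.edges.map w).sum) : c ≤ gdist G w a b :=
  haveI : Nonempty (G.Walk a b) := hab
  le_csInf (Set.range_nonempty _) (Set.forall_mem_range.2 hc)

theorem gdist_nonneg (hw : ∀ e ∈ G.edgeSet, 0 ≤ w e) (a b : V) : 0 ≤ gdist G w a b :=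
  Real.sInf_nonneg <| Set.forall_mem_range.2 (sum_map_edges_nonneg hw)

theorem gdist_self (hw : ∀ e ∈ G.edgeSet, 0 ≤ w e) (a : V) : gdist G w a a = 0 :=
  le_antisymm (gdist_le_sum_edges hw Walk.nil) (gdist_nonneg hw a a)

theorem isEdgePotential_gdist (hG : G.Preconnected) (hw : ∀ e ∈ G.edgeSet, 0 ≤ w e) (j : V) :
    IsEdgePotential G w fun k => gdist G w k j := by
  intro k l hkl
  refine sub_le_iff_le_add.1 (le_gdist (hG l j) fun p => sub_le_iff_le_add'.2 ?_)
  calc gdist G w k j ≤ ((Walk.cons hkl p).edges.map w).sum := gdist_le_sum_edges hw _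
    _ = w s(k, l) + (p.edges.map w).sum := by
      rw [Walk.edges_cons, List.map_cons, List.sum_cons]

theorem IsEdgePotential.le_add_gdist {π : V → ℝ} (hπ : IsEdgePotential G w π)
    (hab : G.Reachable a b) : π a ≤ π b + gdist G w a b :=
  sub_le_iff_le_add'.1 <| le_gdist hab fun p => sub_le_iff_le_add'.2 (hπ.le_add_sum_edges p)

end WeightedDistance

section FacilityDistance

variable {V : Type*} {G : SimpleGraph V} {w : Sym2 V → ℝ} {F : Set V}

/-- The weighted distance from `k` to the nearest facility in `F`. It is an infimum in `ℝ`, so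
that `F` may be infinite; for `F = ∅` it takes the junk value `0`. -/
noncomputable def facilityDist (G : SimpleGraph V) (w : Sym2 V → ℝ) (F : Set V) (k : V) : ℝ :=
  ⨅ j : F, gdist G w k j

theorem inf'_gdist_eq_facilityDist {F : Finset V} (hF : F.Nonempty) (k : V) :
    F.inf' hF (fun j => gdist G w k j) = facilityDist G w F k := by
  rw [Finset.inf'_eq_csInf_image, sInf_image']
  rfl

theorem facilityDist_nonneg (hw : ∀ e ∈ G.edgeSet, 0 ≤ w e) (k : V) :
    0 ≤ facilityDist G w F k :=
  Real.iInf_nonneg fun j => gdist_nonneg hw k j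

theorem bddBelow_range_gdist (hw : ∀ e ∈ G.edgeSet, 0 ≤ w e) (k : V) :
    BddBelow (Set.range fun j : F => gdist G w k j) :=
  ⟨0, Set.forall_mem_range.2 fun j => gdist_nonneg hw k j⟩

theorem facilityDist_eq_zero_of_mem (hw : ∀ e ∈ G.edgeSet, 0 ≤ w e) {k : V} (hk : k ∈ F) :
    facilityDist G w F k = 0 :=
  le_antisymm ((ciInf_le (bddBelow_range_gdist hw k) ⟨k, hk⟩).trans_eq (gdist_self hw k))
    (facilityDist_nonneg hw k)

theorem isEdgePotential_facilityDist (hG : G.Preconnected) (hw : ∀ e ∈ G.edgeSet, 0 ≤ w e)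
    (hF : F.Nonempty) : IsEdgePotential G w (facilityDist G w F) :=
  haveI := hF.to_subtype
  IsEdgePotential.iInf (fun j : F => isEdgePotential_gdist hG hw j) (bddBelow_range_gdist hw)

theorem IsEdgePotential.le_facilityDist {π : V → ℝ} (hπ : IsEdgePotential G w π)
    (hG : G.Preconnected) (hF : F.Nonempty) (hπF : ∀ j ∈ F, π j ≤ 0) (i : V) :
    π i ≤ facilityDist G w F i :=
  haveI := hF.to_subtype
  le_ciInf fun j => (hπ.le_add_gdist (hG i j)).trans (add_le_of_nonpos_left (hπF j j.2))

end FacilityDistance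

theorem stmt8_general {V : Type*} (G : SimpleGraph V) (hG : G.Preconnected)
    (w : Sym2 V → ℝ) (hw : ∀ e ∈ G.edgeSet, 0 ≤ w e)
    (x : V → ℝ) (hx01 : ∀ k, x k = 0 ∨ x k = 1)
    (F : Set V) (hFx : ∀ k, k ∈ F ↔ x k = 1) (hF : F.Nonempty)
    (i : V) (M : ℝ) (hM : ∀ k, facilityDist G w F k ≤ M) :
    IsGreatest {y : ℝ | ∃ π : V → ℝ, (∀ k, 0 ≤ π k) ∧
        (∀ k l, G.Adj k l → π k ≤ π l + w s(k, l)) ∧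
        (∀ k, π k ≤ M * (1 - x k)) ∧ π i = y}
      (facilityDist G w F i) := by
  constructor
  · have bigM : ∀ k, facilityDist G w F k ≤ M * (1 - x k) := by
      intro k
      rcases hx01 k with hk | hk
      · simpa [hk] using hM k
      · simp [hk, facilityDist_eq_zero_of_mem hw ((hFx k).2 hk)]
    exact ⟨facilityDist G w F, facilityDist_nonneg hw,
      isEdgePotential_facilityDist hG hw hF, bigM, rfl⟩
  · rintro _ ⟨π, -, hπ, bigM, rfl⟩
    have nonpos_of_mem : ∀ j ∈ F, π j ≤ 0 := fun j hj => by
      simpa [(hFx j).1 hj] using bigM j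
    exact IsEdgePotential.le_facilityDist hπ hG hF nonpos_of_mem i

/-- The optimal value of the formulation `SP^i` — maximizing `π i` over nonnegative
node potentials satisfying the edge inequalities in both directions and the big-M
constraints `π k ≤ M * (1 - x̄ k)` — equals the distance from `i` to its nearest
facility, provided `M ≥ min_{j ∈ F} d_w(k,j)` for every vertex `k`. -/
theorem stmt8 {V : Type*} [Fintype V] (G : SimpleGraph V) (hG : G.Connected)
    (w : Sym2 V → ℝ) (hw : ∀ e ∈ G.edgeSet, 0 ≤ w e)
    (x : V → ℝ) (hx01 : ∀ k, x k = 0 ∨ x k = 1)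
    (F : Finset V) (hFx : ∀ k, k ∈ F ↔ x k = 1) (hF : F.Nonempty)
    (i : V) (M : ℝ) (hM : ∀ k, F.inf' hF (fun j => gdist G w k j) ≤ M) :
    sSup {y : ℝ | ∃ π : V → ℝ, (∀ k, 0 ≤ π k) ∧
        (∀ k l, G.Adj k l → π k ≤ π l + w s(k, l)) ∧
        (∀ k, π k ≤ M * (1 - x k)) ∧ π i = y} =
      F.inf' hF (fun j => gdist G w i j) := by
  simp only [inf'_gdist_eq_facilityDist] at hM ⊢
  exact (stmt8_general G hG.preconnected w hw x hx01 F hFx hF i M hM).csSup_eq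
end

section
/- Let G be a finite connected simple graph on vertex set V with nonnegative edge weights w, let x̄ : V → {0,1} with nonempty facility set F = {k ∈ V : x̄(k) = 1}, and let i ∈ V. Consider the dual feasible set D of pairs (π, μ) with π : V ∪ {t} → ℝ (t an auxiliary vertex not in V) and μ : V → ℝ satisfying μ(k) ≥ 0 for all k ∈ V, π(k) ≤ π(l) + w({k,l}) and π(l) ≤ π(k) + w({k,l}) for every edge {k,l} of G, and π(k) ≤ π(t) + μ(k) for every k ∈ V, with objective Φ(π,μ) = π(i) − π(t) − ∑_{k ∈ V} x̄(k)·μ(k). Then the supremum of Φ over D is attained at a pair (π, μ) satisfying π(k) ≥ 0 for all k ∈ V, π(t) = 0, and μ(k) = 0 for every k ∈ V with x̄(k) = 1. -/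
open SimpleGraph

/-!
The distance `d` to the facility set gives the optimal dual solution `π = μ = d`, `π t = 0`: the
edge constraints are the triangle inequality, and `μ` vanishes on the facilities because `d` does.
Its value is `d i`. Conversely, summing the edge constraints along a walk from `i` to a facility `f`
and using the constraint at `f` bounds every dual objective value by the length of that walk, hence
by `d i`.
-/

section Walk

variable {V M : Type*} {G : SimpleGraph V}

/-- The weighted length of a walk: the sum of the weights of its edges, with multiplicity. -/
def weightedLength [AddMonoid M] (w : Sym2 V → M) {a b : V} (p : G.Walk a b) : M :=
  (p.edges.map w).sum

@[simp]
theorem weightedLength_nil [AddMonoid M] (w : Sym2 V → M) (a : V) :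
    weightedLength w (Walk.nil : G.Walk a a) = 0 := by
  simp [weightedLength]

@[simp]
theorem weightedLength_cons [AddMonoid M] (w : Sym2 V → M) {a b c : V} (h : G.Adj a b)
    (p : G.Walk b c) : weightedLength w (Walk.cons h p) = w s(a, b) + weightedLength w p := by
  simp [weightedLength]

variable [AddCommMonoid M] [PartialOrder M] [IsOrderedAddMonoid M] {w : Sym2 V → M}

theorem weightedLength_nonneg (hw : ∀ e ∈ G.edgeSet, 0 ≤ w e) {a b : V} (p : G.Walk a b) :
    0 ≤ weightedLength w p :=
  List.sum_nonneg <| List.forall_mem_map.2 fun e he => hw e (p.edges_subset_edgeSet he)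

theorem le_add_weightedLength_of_adj {π : V → M} (hπ : ∀ k l, G.Adj k l → π k ≤ π l + w s(k, l))
    {a b : V} (p : G.Walk a b) : π a ≤ π b + weightedLength w p := by
  induction p with
  | nil => simp
  | @cons a b c h p ih =>
    calc π a ≤ π b + w s(a, b) := hπ a b h
      _ ≤ π c + weightedLength w p + w s(a, b) := by gcongr
      _ = π c + weightedLength w (Walk.cons h p) := by
        rw [weightedLength_cons, add_assoc, add_comm (w s(a, b))]

end Walk

section Dual

variable {V M : Type*} {G : SimpleGraph V} [AddCommMonoid M] [PartialOrder M]
  {w : Sym2 V → M} {π μ : V → M} {πt : M}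

/-- Feasibility for the dual of the shortest-path flow problem with an auxiliary sink `t`: `π` is
the potential on `V`, `πt` its value at `t`, and `μ k` is the multiplier of the capacity of the
zero-length arc `(k, t)`. As `G.Adj` is symmetric, the middle condition bounds the potential
difference along each edge in both directions. -/
def IsDualFeasible (G : SimpleGraph V) (w : Sym2 V → M) (π : V → M) (πt : M) (μ : V → M) : Prop :=
  (∀ k, 0 ≤ μ k) ∧ (∀ k l, G.Adj k l → π k ≤ π l + w s(k, l)) ∧ ∀ k, π k ≤ πt + μ k

theorem IsDualFeasible.le_add_sum_add_weightedLength [IsOrderedAddMonoid M]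
    (h : IsDualFeasible G w π πt μ) {F : Finset V} {i f : V} (hf : f ∈ F) (p : G.Walk i f) :
    π i ≤ πt + ∑ k ∈ F, μ k + weightedLength w p := by
  obtain ⟨hμ, hedge, hsink⟩ := h
  calc π i ≤ π f + weightedLength w p := le_add_weightedLength_of_adj hedge p
    _ ≤ πt + μ f + weightedLength w p := by gcongr; exact hsink f
    _ ≤ πt + ∑ k ∈ F, μ k + weightedLength w p := by
      gcongr
      exact Finset.single_le_sum (fun k _ => hμ k) hf

end Dual

section Distance

variable {V : Type*} {G : SimpleGraph V} {w : Sym2 V → ℝ} {S : Set V}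

/-- The weighted distance from `k` to the set `S`: the infimum of the weighted lengths of all walks
from `k` to a vertex of `S`, with value `0` if there is no such walk. The infimum is taken over all
these walks at once, and not as a minimum of `gdist G w k f` over `f ∈ S`, because `gdist` is `0`
between different components and would then ignore the vertices of `S` that `k` does reach. -/
noncomputable def distToSet (G : SimpleGraph V) (w : Sym2 V → ℝ) (S : Set V) (k : V) : ℝ :=
  ⨅ p : Σ f : S, G.Walk k f, weightedLength w p.2

theorem distToSet_nonneg (hw : ∀ e ∈ G.edgeSet, 0 ≤ w e) (k : V) : 0 ≤ distToSet G w S k :=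
  Real.iInf_nonneg fun p => weightedLength_nonneg hw p.2

theorem distToSet_le_weightedLength (hw : ∀ e ∈ G.edgeSet, 0 ≤ w e) {k f : V} (hf : f ∈ S)
    (p : G.Walk k f) : distToSet G w S k ≤ weightedLength w p :=
  ciInf_le (f := fun q : Σ f : S, G.Walk k f => weightedLength w q.2)
    ⟨0, Set.forall_mem_range.2 fun q => weightedLength_nonneg hw q.2⟩ ⟨⟨f, hf⟩, p⟩

theorem le_distToSet {k : V} {c : ℝ} (hk : ∃ f ∈ S, G.Reachable k f)
    (hc : ∀ f ∈ S, ∀ p : G.Walk k f, c ≤ weightedLength w p) : c ≤ distToSet G w S k := by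
  obtain ⟨f, hf, ⟨p⟩⟩ := hk
  have : Nonempty (Σ f : S, G.Walk k f) := ⟨⟨f, hf⟩, p⟩
  exact le_ciInf fun q => hc q.1 q.1.2 q.2

theorem distToSet_eq_zero_of_not_reachable {k : V} (hk : ¬∃ f ∈ S, G.Reachable k f) :
    distToSet G w S k = 0 := by
  have : IsEmpty (Σ f : S, G.Walk k f) := ⟨fun p => hk ⟨p.1, p.1.2, ⟨p.2⟩⟩⟩
  exact Real.iInf_of_isEmpty _

theorem distToSet_eq_zero_of_mem (hw : ∀ e ∈ G.edgeSet, 0 ≤ w e) {k : V} (hk : k ∈ S) :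
    distToSet G w S k = 0 :=
  le_antisymm (by simpa using distToSet_le_weightedLength hw hk (Walk.nil : G.Walk k k))
    (distToSet_nonneg hw k)

theorem distToSet_le_add_of_adj (hw : ∀ e ∈ G.edgeSet, 0 ≤ w e) {k l : V} (h : G.Adj k l) :
    distToSet G w S k ≤ distToSet G w S l + w s(k, l) := by
  by_cases hl : ∃ f ∈ S, G.Reachable l f
  · rw [← sub_le_iff_le_add]
    refine le_distToSet hl fun f hf p => ?_
    rw [sub_le_iff_le_add']
    simpa using distToSet_le_weightedLength hw hf (Walk.cons h p)
  · have hk : ¬∃ f ∈ S, G.Reachable k f :=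
      fun ⟨f, hf, hkf⟩ => hl ⟨f, hf, h.symm.reachable.trans hkf⟩
    rw [distToSet_eq_zero_of_not_reachable hk, distToSet_eq_zero_of_not_reachable hl, zero_add]
    exact hw _ h

theorem isDualFeasible_distToSet (hw : ∀ e ∈ G.edgeSet, 0 ≤ w e) (S : Set V) :
    IsDualFeasible G w (distToSet G w S) 0 (distToSet G w S) :=
  ⟨distToSet_nonneg hw, fun _ _ => distToSet_le_add_of_adj hw, fun _ => (zero_add _).ge⟩

theorem IsDualFeasible.sub_sub_sum_le_distToSet {π μ : V → ℝ} {πt : ℝ}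
    (h : IsDualFeasible G w π πt μ) {F : Finset V} {i : V} (hi : ∃ f ∈ F, G.Reachable i f) :
    π i - πt - ∑ k ∈ F, μ k ≤ distToSet G w F i := by
  refine le_distToSet hi fun f hf p => ?_
  rw [sub_sub, sub_le_iff_le_add']
  exact h.le_add_sum_add_weightedLength hf p

end Distance

theorem sum_mul_eq_sum_of_eq_zero_or_one {ι R : Type*} [Fintype ι] [NonAssocSemiring R] {x : ι → R}
    (hx : ∀ k, x k = 0 ∨ x k = 1) {F : Finset ι} (hF : ∀ k, k ∈ F ↔ x k = 1) (μ : ι → R) :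
    ∑ k, x k * μ k = ∑ k ∈ F, μ k := by
  have h_off : ∀ k ∉ F, x k * μ k = 0 := fun k hk => by
    rw [(hx k).resolve_right (mt (hF k).2 hk), zero_mul]
  calc ∑ k, x k * μ k = ∑ k ∈ F, x k * μ k :=
        (Finset.sum_subset F.subset_univ fun k _ => h_off k).symm
    _ = ∑ k ∈ F, μ k := Finset.sum_congr rfl fun k hk => by rw [(hF k).1 hk, one_mul]

theorem stmt9_general {V : Type*} (G : SimpleGraph V) (w : Sym2 V → ℝ)
    (hw : ∀ e ∈ G.edgeSet, 0 ≤ w e) (F : Finset V) (i : V) (hi : ∃ f ∈ F, G.Reachable i f) :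
    ∃ π : V → ℝ, ∃ πt : ℝ, ∃ μ : V → ℝ,
      IsDualFeasible G w π πt μ ∧ (∀ k, 0 ≤ π k) ∧ πt = 0 ∧ (∀ k ∈ F, μ k = 0) ∧
      IsGreatest {y : ℝ | ∃ π' : V → ℝ, ∃ πt' : ℝ, ∃ μ' : V → ℝ,
          IsDualFeasible G w π' πt' μ' ∧ y = π' i - πt' - ∑ k ∈ F, μ' k}
        (π i - πt - ∑ k ∈ F, μ k) := by
  have hfeas := isDualFeasible_distToSet hw (F : Set V)
  have hzero : ∀ k ∈ F, distToSet G w F k = 0 := fun k hk => distToSet_eq_zero_of_mem hw hk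
  refine ⟨_, _, _, hfeas, distToSet_nonneg hw, rfl, hzero, ⟨_, _, _, hfeas, rfl⟩, ?_⟩
  rintro _ ⟨π', πt', μ', hfeas', rfl⟩
  rw [Finset.sum_eq_zero hzero, sub_zero, sub_zero]
  exact hfeas'.sub_sub_sum_le_distToSet hi

/-- The supremum of the dual objective `Φ(π,μ) = π i - π t - ∑ k, x̄ k * μ k` over the
dual feasible set is attained at a pair `(π, μ)` with `π k ≥ 0` for all `k ∈ V`,
`π t = 0`, and `μ k = 0` whenever `x̄ k = 1`. Here `π t` is modelled as a separate
real variable `πt` for the auxiliary sink `t`. -/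
theorem stmt9 {V : Type*} [Fintype V] (G : SimpleGraph V) (hG : G.Connected)
    (w : Sym2 V → ℝ) (hw : ∀ e ∈ G.edgeSet, 0 ≤ w e)
    (x : V → ℝ) (hx01 : ∀ k, x k = 0 ∨ x k = 1)
    (F : Finset V) (hFx : ∀ k, k ∈ F ↔ x k = 1) (hF : F.Nonempty) (i : V) :
    ∃ π : V → ℝ, ∃ πt : ℝ, ∃ μ : V → ℝ,
      ((∀ k, 0 ≤ μ k) ∧ (∀ k l, G.Adj k l → π k ≤ π l + w s(k, l)) ∧
        (∀ k, π k ≤ πt + μ k)) ∧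
      (∀ k, 0 ≤ π k) ∧ πt = 0 ∧ (∀ k, x k = 1 → μ k = 0) ∧
      IsGreatest {y : ℝ | ∃ π' : V → ℝ, ∃ πt' : ℝ, ∃ μ' : V → ℝ,
          (∀ k, 0 ≤ μ' k) ∧ (∀ k l, G.Adj k l → π' k ≤ π' l + w s(k, l)) ∧
          (∀ k, π' k ≤ πt' + μ' k) ∧ y = π' i - πt' - ∑ k : V, x k * μ' k}
        (π i - πt - ∑ k : V, x k * μ k) := by
  simpa only [IsDualFeasible, sum_mul_eq_sum_of_eq_zero_or_one hx01 hFx, hFx, and_assoc] using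
    stmt9_general G w hw F i (hF.imp fun f hf => ⟨hf, hG.preconnected i f⟩)
end

section
/- Let n ≥ 1, let g : Fin n → ℕ and b : Fin n → ℕ be positive (g(i) ≥ 1 and b(i) ≥ 1 for all i), let K ∈ ℕ with g(i) ≤ K for all i, and let U > 0 be a real number. Set u = max_i g(i), R = u + 1, and ℓ(i) = R − g(i) for each i. Then the following are equivalent: (1) there exists γ : Fin n → ℝ with 0 ≤ γ(i) ≤ u for all i, ∑_i γ(i) ≤ K, and ∑_{i : ℓ(i) + γ(i) ≥ R} b(i) ≥ U; (2) there exists a subset M ⊆ Fin n with ∑_{i ∈ M} g(i) ≤ K and ∑_{i ∈ M} b(i) ≥ U. (This is the correspondence, used in the NP-hardness proof of the attacker's problem on star networks, between feasible edge downgrades un-covering demand at least U and solutions of the KNAPSACK instance with weights g, values b, capacity K, and target U: on the star with facility at the central node, edge lengths ℓ(i), uniform downgrading costs 1, uniform upper bound u, budget K, and coverage radius R, the satellite node i is un-covered after downgrade γ exactly when ℓ(i) + γ(i) ≥ R.) -/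
/-!
Because `ℓ i = R - g i`, satellite `i` is un-covered exactly when its edge is lengthened by at least
`g i`. The cheapest way to un-cover a set `M` of satellites is therefore to take `γ = g` on `M` and
`γ = 0` elsewhere, at cost `∑ i ∈ M, g i`, so `M` can be un-covered within the budget exactly when
it fits into the knapsack.
-/

section StarNetwork

variable {ι α β : Type*} [Fintype ι]

/-- Feasibility of an edge downgrade `γ` in the attacker's problem with unit costs, uniform upper
bound `u` and budget `K`. On a star, edges are indexed by their satellite endpoints. -/
def IsFeasibleDowngrade [AddCommMonoid α] [LE α] (u K : α) (γ : ι → α) : Prop :=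
  (∀ i, 0 ≤ γ i ∧ γ i ≤ u) ∧ ∑ i, γ i ≤ K

/-- The satellites un-covered within radius `R` by the facility at the center of a star, where `d i`
is the length of the edge to satellite `i`. Distance exactly `R` counts as un-covered. -/
def uncovered [LE α] [DecidableLE α] (R : α) (d : ι → α) : Finset ι :=
  Finset.univ.filter fun i => R ≤ d i

section AddCommMonoid

variable [AddCommMonoid α] [Preorder α] {u K : α} {g γ : ι → α} {M : Finset ι}

theorem isFeasibleDowngrade_indicator (hg : ∀ i, 0 ≤ g i) (hgu : ∀ i, g i ≤ u)
    (hM : ∑ i ∈ M, g i ≤ K) : IsFeasibleDowngrade u K ((M : Set ι).indicator g) := by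
  refine ⟨fun i => ⟨Set.indicator_apply_nonneg fun _ => hg i, ?_⟩, ?_⟩
  · exact Set.indicator_apply_le' (fun _ => hgu i) fun _ => (hg i).trans (hgu i)
  · rwa [Finset.sum_indicator_subset g M.subset_univ]

theorem IsFeasibleDowngrade.sum_le_of_le [IsOrderedAddMonoid α]
    (hγ : IsFeasibleDowngrade u K γ) (hg : ∀ i ∈ M, g i ≤ γ i) : ∑ i ∈ M, g i ≤ K :=
  calc
    ∑ i ∈ M, g i ≤ ∑ i ∈ M, γ i := Finset.sum_le_sum hg
    _ ≤ ∑ i, γ i := Finset.sum_le_univ_sum_of_nonneg fun i => (hγ.1 i).1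
    _ ≤ K := hγ.2

end AddCommMonoid

section AddCommGroup

variable [AddCommGroup α] [Preorder α] [IsOrderedAddMonoid α] [DecidableLE α] {u K R : α}
  {g ℓ γ : ι → α} {M : Finset ι}

theorem subset_uncovered_add_iff (hℓ : ∀ i, ℓ i = R - g i) :
    M ⊆ uncovered R (ℓ + γ) ↔ ∀ i ∈ M, g i ≤ γ i := by
  have le_length_iff (i : ι) : R ≤ ℓ i + γ i ↔ g i ≤ γ i := by
    rw [hℓ, sub_add, le_sub_self_iff, sub_nonpos]
  simp only [Finset.subset_iff, uncovered, Finset.mem_filter_univ, Pi.add_apply, le_length_iff]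

theorem exists_isFeasibleDowngrade_subset_uncovered_iff (hg : ∀ i, 0 ≤ g i)
    (hgu : ∀ i, g i ≤ u) (hℓ : ∀ i, ℓ i = R - g i) :
    (∃ γ, IsFeasibleDowngrade u K γ ∧ M ⊆ uncovered R (ℓ + γ)) ↔ ∑ i ∈ M, g i ≤ K := by
  simp only [subset_uncovered_add_iff hℓ]
  constructor
  · rintro ⟨γ, hγ, hgγ⟩
    exact hγ.sum_le_of_le hgγ
  · intro hM
    refine ⟨(M : Set ι).indicator g, isFeasibleDowngrade_indicator hg hgu hM, fun i hi => ?_⟩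
    exact (Set.indicator_of_mem (Finset.mem_coe.mpr hi) g).ge

theorem stmt16_general [AddCommMonoid β] [Preorder β] [IsOrderedAddMonoid β]
    {b : ι → β} {U : β} (hg : ∀ i, 0 ≤ g i) (hb : ∀ i, 0 ≤ b i) (hgu : ∀ i, g i ≤ u)
    (hℓ : ∀ i, ℓ i = R - g i) :
    (∃ γ, IsFeasibleDowngrade u K γ ∧ U ≤ ∑ i ∈ uncovered R (ℓ + γ), b i) ↔
      ∃ M : Finset ι, ∑ i ∈ M, g i ≤ K ∧ U ≤ ∑ i ∈ M, b i := by
  simp only [← exists_isFeasibleDowngrade_subset_uncovered_iff hg hgu hℓ]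
  constructor
  · rintro ⟨γ, hγ, hU⟩
    exact ⟨uncovered R (ℓ + γ), ⟨γ, hγ, Finset.Subset.rfl⟩, hU⟩
  · rintro ⟨M, ⟨γ, hγ, hM⟩, hU⟩
    exact ⟨γ, hγ, hU.trans (Finset.sum_le_sum_of_subset_of_nonneg hM fun i _ _ => hb i)⟩

end AddCommGroup

end StarNetwork

/-- Correspondence used in the NP-hardness proof of the attacker's problem on star
networks: with `u = max_i g i`, `R = u + 1` and edge lengths `ℓ i = R - g i`, there is
a feasible downgrade `γ` (with `0 ≤ γ i ≤ u`, total cost `∑ γ i ≤ K`) un-covering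
demand at least `U` — satellite `i` is un-covered iff `ℓ i + γ i ≥ R` — if and only if
the KNAPSACK instance with weights `g`, values `b`, capacity `K` and target `U` has a
solution. -/
theorem stmt16 (n : ℕ) (hn : 1 ≤ n) (g b : Fin n → ℕ)
    (hg : ∀ i, 1 ≤ g i) (hb : ∀ i, 1 ≤ b i)
    (K : ℕ) (hgK : ∀ i, g i ≤ K) (U : ℝ) (hU : 0 < U)
    (u : ℕ) (hu : u = Finset.univ.sup g)
    (R : ℝ) (hR : R = (u : ℝ) + 1)
    (ℓ : Fin n → ℝ) (hℓ : ∀ i, ℓ i = R - (g i : ℝ)) :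
    (∃ γ : Fin n → ℝ, (∀ i, 0 ≤ γ i ∧ γ i ≤ (u : ℝ)) ∧ (∑ i, γ i) ≤ (K : ℝ) ∧
        U ≤ ∑ i ∈ Finset.univ.filter (fun i => R ≤ ℓ i + γ i), (b i : ℝ)) ↔
      (∃ M : Finset (Fin n), (∑ i ∈ M, g i) ≤ K ∧ U ≤ ∑ i ∈ M, (b i : ℝ)) := by
  have hgu (i) : (g i : ℝ) ≤ u := mod_cast hu ▸ Finset.le_sup (Finset.mem_univ i)
  simpa only [← Nat.cast_sum, Nat.cast_le, IsFeasibleDowngrade, uncovered, Pi.add_apply, and_assoc]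
    using stmt16_general (K := (K : ℝ)) (b := fun i => (b i : ℝ)) (fun _ => Nat.cast_nonneg _)
      (fun _ => Nat.cast_nonneg _) hgu hℓ
end
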